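/- For every real α > 1, there exists a constant c > 0 and, for every sufficiently large n, a finite point set X in the closed unit disk in ℝ^2 that is α-evenly distributed, with |X| = Θ(n) and L(X) ≥ c·|X|^{3/4}. -/

import Mathlib

open scoped Classical RealInnerProductSpace
open Metric MeasureTheory

/-- The set of extreme points (convex-layer vertices) of a finite point set. -/
noncomputable def extremePts {d : ℕ} (S : Finset (EuclideanSpace ℝ (Fin d))) :
    Finset (EuclideanSpace ℝ (Fin d)) :=
  S.filter fun x =>
    x ∉ convexHull ℝ ((S.erase x : Finset (EuclideanSpace ℝ (Fin d))) :
      Set (EuclideanSpace ℝ (Fin d)))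

/-- `peel S k` is the set of points remaining after `k` peeling steps, i.e. `X_{k+1}`. -/
noncomputable def peel {d : ℕ} (S : Finset (EuclideanSpace ℝ (Fin d))) :
    ℕ → Finset (EuclideanSpace ℝ (Fin d))
  | 0 => S
  | k + 1 => peel S k \ extremePts (peel S k)

/-- The layer number: the number of peeling steps needed to remove all points. -/
noncomputable def layerNum {d : ℕ} (S : Finset (EuclideanSpace ℝ (Fin d))) : ℕ :=
  sInf {k | peel S k = ∅}

/-!
A dense enough set of points in the unit disk with mutual distances at least `1 / m ^ 2` is evenly
distributed, by a packing bound: areas are not normalized by `π`, which leaves room for its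
constant. Most of the points are taken from the square lattice of spacing `1 / m ^ 2` in a slightly
smaller disk. Around it lie of order `m ^ 3` concentric rings, each a regular `2 * m`-gon. The
sagitta of its sides is of order `1 / m ^ 2`, but rotating the next ring by only `π / m ^ 2` keeps
the new points near the vertices, where the polygon is just of order `1 / m ^ 3` below its
circumcircle. So radii shrinking by `8 / m ^ 3` put each ring inside the convex hull of the previous
one, all rings fit into an annulus of bounded width, and every peeling step reaches at most one
further ring.
-/

open Filter Module
open scoped Real Topology Pointwise

section Layers

variable {d : ℕ} {S : Finset (EuclideanSpace ℝ (Fin d))}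

lemma extremePts_nonempty (hS : S.Nonempty) : (extremePts S).Nonempty := by
  have hne : (convexHull ℝ (S : Set (EuclideanSpace ℝ (Fin d)))).Nonempty :=
    convexHull_nonempty_iff.2 hS
  obtain ⟨x, hx⟩ := (S.finite_toSet.isCompact_convexHull ℝ).extremePoints_nonempty hne
  refine ⟨x, Finset.mem_filter.2 ⟨extremePoints_convexHull_subset hx, fun hmem ↦ ?_⟩⟩
  rw [(convex_convexHull ℝ _).mem_extremePoints_iff_mem_sdiff_convexHull_sdiff] at hx
  refine hx.2 (convexHull_mono ?_ hmem)
  rw [Finset.coe_erase]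
  exact Set.sdiff_subset_sdiff_left (subset_convexHull ℝ _)

lemma notMem_extremePts_of_mem_convexHull {O : Set (EuclideanSpace ℝ (Fin d))}
    {p : EuclideanSpace ℝ (Fin d)} (hOS : O ⊆ S) (hp : p ∈ convexHull ℝ O) (hpO : p ∉ O) :
    p ∉ extremePts S := by
  refine fun h ↦ (Finset.mem_filter.1 h).2 (convexHull_mono ?_ hp)
  rw [Finset.coe_erase]
  exact Set.subset_sdiff_singleton hOS hpO

lemma card_peel_le (S : Finset (EuclideanSpace ℝ (Fin d))) (k : ℕ) :
    (peel S k).card ≤ S.card - k := by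
  induction k with
  | zero => simp [peel]
  | succ k ih =>
    obtain hempty | hne := (peel S k).eq_empty_or_nonempty
    · simp [peel, hempty]
    · have hsub : extremePts (peel S k) ⊆ peel S k := Finset.filter_subset _ _
      have hcard := Finset.card_sdiff_add_card_eq_card hsub
      have hpos := (extremePts_nonempty hne).card_pos
      rw [peel]
      omega

lemma peel_card_eq_empty (S : Finset (EuclideanSpace ℝ (Fin d))) : peel S S.card = ∅ := by
  simpa using card_peel_le S S.card

variable {J : ℕ} {O : ℕ → Set (EuclideanSpace ℝ (Fin d))}

lemma subset_peel_of_subset_convexHull_sdiff (hOS : ∀ j < J, O j ⊆ S)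
    (hO : ∀ j, j + 1 < J → O (j + 1) ⊆ convexHull ℝ (O j) \ O j) {i j : ℕ} (hij : i ≤ j)
    (hj : j < J) : O j ⊆ peel S i := by
  induction i generalizing j with
  | zero => exact hOS j hj
  | succ i ih =>
    obtain ⟨j, rfl⟩ := Nat.exists_eq_add_one.2 (Nat.zero_lt_of_lt hij)
    intro p hp
    obtain ⟨hmem, hnot⟩ := hO j hj hp
    exact Finset.mem_sdiff.2 ⟨ih (by omega) hj hp,
      notMem_extremePts_of_mem_convexHull (ih (by omega) (by omega)) hmem hnot⟩

lemma le_layerNum_of_subset_convexHull_sdiff (hOS : ∀ j < J, O j ⊆ S)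
    (hne : ∀ j < J, (O j).Nonempty)
    (hO : ∀ j, j + 1 < J → O (j + 1) ⊆ convexHull ℝ (O j) \ O j) : J ≤ layerNum S := by
  refine le_csInf ⟨S.card, peel_card_eq_empty S⟩ fun k hk ↦ ?_
  by_contra! hlt
  obtain ⟨p, hp⟩ := hne k hlt
  have hp' := subset_peel_of_subset_convexHull_sdiff hOS hO le_rfl hlt hp
  rw [show peel S k = ∅ from hk] at hp'
  exact Finset.notMem_empty p hp'

end Layers

section Lattice

variable {E ι : Type*} [NormedAddCommGroup E] [InnerProductSpace ℝ E] [Fintype ι]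

lemma one_le_norm_of_mem_span_orthonormalBasis (b : OrthonormalBasis ι ℝ E) {x : E}
    (hx : x ∈ Submodule.span ℤ (Set.range b)) (hx0 : x ≠ 0) : 1 ≤ ‖x‖ := by
  rw [← b.coe_toBasis, Basis.mem_span_iff_repr_mem] at hx
  obtain ⟨i, hi⟩ : ∃ i, b.repr x i ≠ 0 := by
    by_contra! h
    exact hx0 (b.repr.map_eq_zero_iff.1 (PiLp.ext h))
  obtain ⟨n, hn⟩ := hx i
  rw [b.coe_toBasis_repr_apply] at hn
  have hn0 : n ≠ 0 := by
    rintro rfl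
    exact hi (by simpa using hn.symm)
  calc (1 : ℝ) ≤ |(n : ℝ)| := mod_cast Int.one_le_abs hn0
    _ = ‖b.repr x i‖ := by rw [← hn]; rfl
    _ ≤ ‖b.repr x‖ := PiLp.norm_apply_le _ i
    _ = ‖x‖ := b.repr.norm_map x

variable [FiniteDimensional ℝ E] [MeasurableSpace E] [BorelSpace E]

lemma covolume_span_orthonormalBasis (b : OrthonormalBasis ι ℝ E) :
    ZLattice.covolume (Submodule.span ℤ (Set.range b.toBasis)) = 1 := by
  rw [ZLattice.covolume_eq_measure_fundamentalDomain _ _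
    (ZSpan.isAddFundamentalDomain b.toBasis volume), measureReal_def,
    measure_congr (ZSpan.fundamentalDomain_ae_parallelepiped b.toBasis volume), b.coe_toBasis,
    b.volume_parallelepiped, ENNReal.toReal_one]

lemma eventually_exists_finset_pairwise_le_dist_card {s : Set E} (hs : Bornology.IsBounded s)
    (hsm : MeasurableSet s) (hfr : volume (frontier s) = 0) {c : ℝ} (hc : c < volume.real s) :
    ∀ᶠ k : ℕ in atTop, ∃ Z : Finset E, (Z : Set E) ⊆ s ∧
      (Z : Set E).Pairwise (fun p q ↦ 1 / (k : ℝ) ≤ dist p q) ∧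
      c * (k : ℝ) ^ finrank ℝ E ≤ Z.card := by
  let b := stdOrthonormalBasis ℝ E
  let L := Submodule.span ℤ (Set.range b.toBasis)
  have hlim := ZLattice.covolume.tendsto_card_div_pow' (L := L) hs hsm hfr
  rw [covolume_span_orthonormalBasis, div_one] at hlim
  filter_upwards [hlim.eventually_const_le hc, eventually_gt_atTop 0] with k hk hk0
  have hk0' : (0 : ℝ) < k := mod_cast hk0
  have hfin : (s ∩ (k : ℝ)⁻¹ • (L : Set E)).Finite := by
    have := (ZSpan.setFinite_inter b.toBasis (hs.smul₀ (k : ℝ))).smul_set (a := (k : ℝ)⁻¹)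
    rwa [Set.smul_set_inter₀ (inv_ne_zero hk0'.ne'), inv_smul_smul₀ hk0'.ne'] at this
  refine ⟨hfin.toFinset, by simp, ?_, ?_⟩
  · rw [hfin.coe_toFinset]
    rintro _ ⟨-, x, hx, rfl⟩ _ ⟨-, y, hy, rfl⟩ hxy
    have hsub : 1 ≤ ‖x - y‖ := by
      refine one_le_norm_of_mem_span_orthonormalBasis b ?_ (sub_ne_zero.2 fun h ↦ hxy (by rw [h]))
      rw [← b.coe_toBasis]
      exact sub_mem hx hy
    change 1 / (k : ℝ) ≤ dist ((k : ℝ)⁻¹ • x) ((k : ℝ)⁻¹ • y)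
    rw [dist_smul₀, norm_inv, Real.norm_natCast, dist_eq_norm, one_div]
    exact le_mul_of_one_le_right (by positivity) hsub
  · rwa [le_div_iff₀ (by positivity), Nat.card_coe_set_eq,
      Set.ncard_eq_toFinset_card _ hfin] at hk

end Lattice

section Packing

lemma card_mul_pow_le_of_pairwise_le_dist {E : Type*} [NormedAddCommGroup E] [NormedSpace ℝ E]
    [FiniteDimensional ℝ E] {C : Finset E} {z : E} {r l : ℝ} (hl : 0 < l) (hr : 0 ≤ r)
    (hC : (C : Set E) ⊆ closedBall z r) (hsep : (C : Set E).Pairwise fun p q ↦ l ≤ dist p q) :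
    C.card * l ^ finrank ℝ E ≤ (2 * r + l) ^ finrank ℝ E := by
  borelize E
  let μ : Measure E := Measure.addHaar
  have hball (x : E) {s : ℝ} (hs : 0 < s) :
      μ.real (ball x s) = s ^ finrank ℝ E * μ.real (ball 0 1) := by
    rw [measureReal_def, μ.addHaar_ball_of_pos x hs, ENNReal.toReal_mul,
      ENNReal.toReal_ofReal (by positivity), measureReal_def]
  have hdisj : (C : Set E).PairwiseDisjoint fun p ↦ ball p (l / 2) := fun p hp q hq hpq ↦
    ball_disjoint_ball (by linarith [hsep hp hq hpq])
  have hsub : ⋃ p ∈ C, ball p (l / 2) ⊆ ball z (r + l / 2) := Set.iUnion₂_subset fun p hp ↦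
    ball_subset_ball' (by linarith [mem_closedBall.1 (hC hp)])
  have hunit : 0 < μ.real (ball 0 1) :=
    ENNReal.toReal_pos (measure_ball_pos μ 0 one_pos).ne' measure_ball_lt_top.ne
  have hvol : C.card * (l / 2) ^ finrank ℝ E ≤ (r + l / 2) ^ finrank ℝ E := by
    refine le_of_mul_le_mul_right ?_ hunit
    calc C.card * (l / 2) ^ finrank ℝ E * μ.real (ball 0 1)
        = ∑ p ∈ C, μ.real (ball p (l / 2)) := by
          simp only [hball _ (half_pos hl), Finset.sum_const, nsmul_eq_mul,
            mul_assoc]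
      _ = μ.real (⋃ p ∈ C, ball p (l / 2)) :=
          (measureReal_biUnion_finset hdisj (fun _ _ ↦ measurableSet_ball)
            fun _ _ ↦ measure_ball_lt_top.ne).symm
      _ ≤ μ.real (ball z (r + l / 2)) := measureReal_mono hsub measure_ball_lt_top.ne
      _ = (r + l / 2) ^ finrank ℝ E * μ.real (ball 0 1) :=
          hball _ (by positivity)
  calc C.card * l ^ finrank ℝ E
      = 2 ^ finrank ℝ E * (C.card * (l / 2) ^ finrank ℝ E) := by
        rw [div_pow]; field_simp
    _ ≤ 2 ^ finrank ℝ E * (r + l / 2) ^ finrank ℝ E := by gcongr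
    _ = (2 * r + l) ^ finrank ℝ E := by rw [← mul_pow]; ring

section InnerProductSpace

variable {E : Type*} [NormedAddCommGroup E] [InnerProductSpace ℝ E] {C : Finset E} {z : E}
  {r l : ℝ}

lemma sum_sum_dist_sq_le (C : Finset E) (z : E) :
    ∑ p ∈ C, ∑ q ∈ C, dist p q ^ 2 ≤ 2 * C.card * ∑ p ∈ C, dist p z ^ 2 := by
  have hexpand (p q : E) :
      dist p q ^ 2 = dist p z ^ 2 + dist q z ^ 2 - 2 * ⟪p - z, q - z⟫ := by
    simp only [dist_eq_norm]
    rw [← sub_sub_sub_cancel_right p q z, norm_sub_sq_real]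
    ring
  have hcentroid : ∑ p ∈ C, ∑ q ∈ C, ⟪p - z, q - z⟫ = ‖∑ p ∈ C, (p - z)‖ ^ 2 := by
    rw [← real_inner_self_eq_norm_sq, sum_inner]
    exact Finset.sum_congr rfl fun p _ ↦ (inner_sum ..).symm
  have hnonneg := sq_nonneg ‖∑ p ∈ C, (p - z)‖
  calc ∑ p ∈ C, ∑ q ∈ C, dist p q ^ 2
      = ∑ p ∈ C, ∑ q ∈ C, (dist p z ^ 2 + dist q z ^ 2 - 2 * ⟪p - z, q - z⟫) := by
        simp_rw [← hexpand]
    _ = 2 * C.card * ∑ p ∈ C, dist p z ^ 2 - 2 * ‖∑ p ∈ C, (p - z)‖ ^ 2 := by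
        simp only [Finset.sum_sub_distrib, Finset.sum_add_distrib, Finset.sum_const, nsmul_eq_mul,
          ← Finset.mul_sum, hcentroid]
        ring
    _ ≤ 2 * C.card * ∑ p ∈ C, dist p z ^ 2 := by linarith

lemma card_sub_one_mul_sq_le_of_pairwise_le_dist (hl : 0 ≤ l) (hC : (C : Set E) ⊆ closedBall z r)
    (hsep : (C : Set E).Pairwise fun p q ↦ l ≤ dist p q) :
    (C.card - 1) * l ^ 2 ≤ 2 * C.card * r ^ 2 := by
  obtain rfl | hne := C.eq_empty_or_nonempty
  · simpa using sq_nonneg l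
  have hcard : (0 : ℝ) < C.card := mod_cast hne.card_pos
  refine le_of_mul_le_mul_left ?_ hcard
  calc C.card * ((C.card - 1) * l ^ 2)
      = ∑ p ∈ C, ∑ q ∈ C.erase p, l ^ 2 := by
        rw [Finset.sum_congr rfl fun p hp ↦ by
          rw [Finset.sum_const, nsmul_eq_mul, Finset.cast_card_erase_of_mem hp]]
        simp
    _ ≤ ∑ p ∈ C, ∑ q ∈ C.erase p, dist p q ^ 2 := by
        gcongr with p hp q hq
        exact hsep hp (Finset.mem_of_mem_erase hq) (Finset.ne_of_mem_erase hq).symm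
    _ ≤ ∑ p ∈ C, ∑ q ∈ C, dist p q ^ 2 := by
        gcongr with p
        exact Finset.erase_subset _ _
    _ ≤ 2 * C.card * ∑ p ∈ C, dist p z ^ 2 := sum_sum_dist_sq_le C z
    _ ≤ 2 * C.card * ∑ p ∈ C, r ^ 2 := by
        gcongr with p hp
        exact hC hp
    _ = C.card * (2 * C.card * r ^ 2) := by
        rw [Finset.sum_const, nsmul_eq_mul]; ring

end InnerProductSpace

lemma sq_le_two_mul_sq_of_two_pow_lt_card {ι : Type*} [Fintype ι]
    {C : Finset (EuclideanSpace ℝ ι)} {z : EuclideanSpace ℝ ι} {r l : ℝ} (hl : 0 ≤ l)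
    (hcard : 2 ^ Fintype.card ι < C.card) (hC : (C : Set (EuclideanSpace ℝ ι)) ⊆ closedBall z r)
    (hsep : (C : Set (EuclideanSpace ℝ ι)).Pairwise fun p q ↦ l ≤ dist p q) :
    l ^ 2 ≤ 2 * r ^ 2 := by
  let orthant (p : EuclideanSpace ℝ ι) : ι → Bool := fun i ↦ z i ≤ p i
  obtain ⟨p, hp, q, hq, hpq, hsame⟩ : ∃ p ∈ C, ∃ q ∈ C, p ≠ q ∧ orthant p = orthant q :=
    Finset.exists_ne_map_eq_of_card_lt_of_maps_to (t := Finset.univ) (by simpa using hcard)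
      fun _ _ ↦ Finset.mem_coe.2 (Finset.mem_univ _)
  have hinner : 0 ≤ ⟪p - z, q - z⟫ := by
    rw [PiLp.inner_apply]
    refine Finset.sum_nonneg fun i _ ↦ ?_
    have hi : z i ≤ p i ↔ z i ≤ q i := by simpa [orthant] using congrFun hsame i
    change 0 ≤ (q i - z i) * (p i - z i)
    obtain h | h := le_or_gt (z i) (p i)
    · exact mul_nonneg (sub_nonneg.2 (hi.1 h)) (sub_nonneg.2 h)
    · have h' := lt_of_not_ge (mt hi.2 h.not_ge)
      exact mul_nonneg_of_nonpos_of_nonpos (sub_nonpos.2 h'.le) (sub_nonpos.2 h.le)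
  calc l ^ 2 ≤ ‖p - q‖ ^ 2 := by
        gcongr
        exact (hsep hp hq hpq).trans_eq (dist_eq_norm p q)
    _ = ‖p - z‖ ^ 2 - 2 * ⟪p - z, q - z⟫ + ‖q - z‖ ^ 2 := by
        rw [← sub_sub_sub_cancel_right p q z, norm_sub_sq_real]
    _ ≤ ‖p - z‖ ^ 2 + ‖q - z‖ ^ 2 := by linarith
    _ ≤ r ^ 2 + r ^ 2 := by
        gcongr
        · exact mem_closedBall_iff_norm.1 (hC hp)
        · exact mem_closedBall_iff_norm.1 (hC hq)
    _ = 2 * r ^ 2 := by ring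

-- `48 / 5` has to stay below `π ^ 2`, as a square lattice of spacing `l` puts about `π / l ^ 2`
-- points into the unit disk. The sum of squared distances is good enough for `#C ≤ 4`, orthants
-- for `#C = 5`, and comparing areas for `#C ≥ 6`.
lemma card_sub_one_mul_sq_le_of_pairwise_le_dist_plane {C : Finset (EuclideanSpace ℝ (Fin 2))}
    {z : EuclideanSpace ℝ (Fin 2)} {r l : ℝ} (hl : 0 < l) (hr : 0 ≤ r)
    (hC : (C : Set (EuclideanSpace ℝ (Fin 2))) ⊆ closedBall z r)
    (hsep : (C : Set (EuclideanSpace ℝ (Fin 2))).Pairwise fun p q ↦ l ≤ dist p q) :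
    (C.card - 1) * l ^ 2 ≤ 48 / 5 * r ^ 2 := by
  obtain hle | hfive | hge : C.card ≤ 4 ∨ C.card = 5 ∨ 6 ≤ C.card := by omega
  · have hle' : (C.card : ℝ) ≤ 4 := mod_cast hle
    calc (C.card - 1) * l ^ 2
        ≤ 2 * C.card * r ^ 2 := card_sub_one_mul_sq_le_of_pairwise_le_dist hl.le hC hsep
      _ ≤ 48 / 5 * r ^ 2 := by gcongr; linarith
  · have horthant := sq_le_two_mul_sq_of_two_pow_lt_card hl.le (by simp [hfive]) hC hsep
    rw [hfive]
    push_cast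
    linarith [sq_nonneg r]
  · have hpack := card_mul_pow_le_of_pairwise_le_dist hl hr hC hsep
    rw [finrank_euclideanSpace_fin] at hpack
    have hge' : (6 : ℝ) ≤ C.card := mod_cast hge
    set s := √(C.card : ℝ)
    have hs : s ^ 2 = C.card := Real.sq_sqrt (Nat.cast_nonneg _)
    have hs' : 17 / 7 ≤ s := Real.le_sqrt_of_sq_le (by linarith)
    have hsl : (s - 1) * l ≤ 2 * r := by
      have : s * l ≤ 2 * r + l :=
        le_of_sq_le_sq (by rwa [mul_pow, hs]) (by positivity)
      linarith
    calc (C.card - 1) * l ^ 2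
        = (s + 1) * (s - 1) * l ^ 2 := by rw [← hs]; ring
      _ ≤ (12 / 5 * (s - 1)) * (s - 1) * l ^ 2 := by
          gcongr <;> linarith
      _ = 12 / 5 * ((s - 1) * l) ^ 2 := by ring
      _ ≤ 12 / 5 * (2 * r) ^ 2 := by
          have : 0 ≤ (s - 1) * l := mul_nonneg (by linarith) hl.le
          gcongr
      _ = 48 / 5 * r ^ 2 := by ring

end Packing

section EvenlyDistributed

/-- `α`-even distribution: a disk `B` holds at most `⌈α * #X * volume B⌉` points of `X`. The volume
is not normalized by that of the unit ball. -/
def IsEvenlyDistributed {d : ℕ} (α : ℝ) (X : Finset (EuclideanSpace ℝ (Fin d))) : Prop :=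
  ∀ (z : EuclideanSpace ℝ (Fin d)) (r : ℝ), 0 < r →
    ((X.filter fun x => x ∈ closedBall z r).card : ℤ)
      ≤ ⌈α * X.card * (volume (closedBall z r)).toReal⌉

lemma IsEvenlyDistributed.mono {d : ℕ} {α β : ℝ} {X : Finset (EuclideanSpace ℝ (Fin d))}
    (h : IsEvenlyDistributed α X) (hαβ : α ≤ β) : IsEvenlyDistributed β X := fun z r hr ↦
  (h z r hr).trans (by gcongr)

lemma volume_toReal_closedBall_plane (z : EuclideanSpace ℝ (Fin 2)) {r : ℝ} (hr : 0 ≤ r) :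
    (volume (closedBall z r)).toReal = π * r ^ 2 := by
  rw [EuclideanSpace.volume_closedBall_fin_two, ENNReal.toReal_mul, ENNReal.toReal_pow,
    ENNReal.toReal_ofReal hr, ENNReal.toReal_ofReal Real.pi_nonneg, mul_comm]

lemma isEvenlyDistributed_of_pairwise_le_dist {X : Finset (EuclideanSpace ℝ (Fin 2))} {α l : ℝ}
    (hl : 0 < l) (hsep : (X : Set (EuclideanSpace ℝ (Fin 2))).Pairwise fun p q ↦ l ≤ dist p q)
    (hX : 48 / 5 < α * π * (X.card * l ^ 2)) : IsEvenlyDistributed α X := by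
  intro z r hr
  set C := X.filter fun x => x ∈ closedBall z r
  have hpack : (C.card - 1) * l ^ 2 ≤ 48 / 5 * r ^ 2 :=
    card_sub_one_mul_sq_le_of_pairwise_le_dist_plane hl hr.le
      (fun x hx ↦ (Finset.mem_filter.1 hx).2) (hsep.mono (Finset.filter_subset _ _))
  have hlt : (C.card : ℝ) - 1 < α * X.card * (π * r ^ 2) := by
    refine lt_of_mul_lt_mul_right ?_ (sq_nonneg l)
    calc (C.card - 1) * l ^ 2 ≤ 48 / 5 * r ^ 2 := hpack
      _ < α * π * (X.card * l ^ 2) * r ^ 2 := by gcongr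
      _ = α * X.card * (π * r ^ 2) * l ^ 2 := by ring
  rw [volume_toReal_closedBall_plane z hr.le, ← Int.sub_one_lt_iff, Int.lt_ceil]
  push_cast
  exact hlt

end EvenlyDistributed

section PolarCoordinates

/-- The point of the unit circle at angle `θ`. -/
noncomputable def unitVec (θ : ℝ) : EuclideanSpace ℝ (Fin 2) := !₂[Real.cos θ, Real.sin θ]

lemma norm_unitVec (θ : ℝ) : ‖unitVec θ‖ = 1 := by
  simp [unitVec, EuclideanSpace.norm_eq]

lemma unitVec_antiperiodic : Function.Antiperiodic unitVec π := fun θ ↦ by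
  ext i
  fin_cases i <;> simp [unitVec]

lemma dist_smul_unitVec_sq (r s θ η : ℝ) :
    dist (r • unitVec θ) (s • unitVec η) ^ 2 =
      (r - s) ^ 2 + 2 * r * s * (1 - Real.cos (θ - η)) := by
  rw [EuclideanSpace.dist_sq_eq, Fin.sum_univ_two, Real.cos_sub]
  simp only [unitVec, PiLp.smul_apply, Real.dist_eq, sq_abs, smul_eq_mul, Matrix.cons_val_zero,
    Matrix.cons_val_one]
  linear_combination r ^ 2 * Real.cos_sq_add_sin_sq θ + s ^ 2 * Real.cos_sq_add_sin_sq η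

lemma sin_smul_unitVec_add (θ φ δ : ℝ) :
    Real.sin φ • unitVec (θ + δ) =
      Real.sin (φ - δ) • unitVec θ + Real.sin δ • unitVec (θ + φ) := by
  ext i
  fin_cases i
  · simp only [unitVec, Real.cos_add, Fin.zero_eta, PiLp.smul_apply, Matrix.cons_val_zero,
      smul_eq_mul, Real.sin_sub, PiLp.add_apply]
    ring
  · simp only [unitVec, Real.sin_add, Fin.mk_one, PiLp.smul_apply, Matrix.cons_val_one,
      Matrix.cons_val_fin_one, smul_eq_mul, Real.sin_sub, PiLp.add_apply]
    ring

variable {r r' φ δ : ℝ}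

lemma sin_add_sin_sub_le (hδ : 0 ≤ δ) (hδφ : δ ≤ φ) (hφ : φ ≤ π / 2) :
    Real.sin δ + Real.sin (φ - δ) ≤ (1 + π * δ * φ / 4) * Real.sin φ := by
  have hsin : 0 ≤ Real.sin φ := Real.sin_nonneg_of_nonneg_of_le_pi (by linarith) (by linarith)
  have hchord : φ ≤ π / 2 * Real.sin φ :=
    calc φ = π / 2 * (2 / π * φ) := by field_simp
      _ ≤ π / 2 * Real.sin φ := by gcongr; exact Real.mul_le_sin (hδ.trans hδφ) hφ
  have hversin : Real.sin δ * (1 - Real.cos φ) ≤ δ * (φ ^ 2 / 2) :=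
    mul_le_mul (Real.sin_le hδ) (by linarith [Real.one_sub_sq_div_two_le_cos (x := φ)])
      (by linarith [Real.cos_le_one φ]) hδ
  calc Real.sin δ + Real.sin (φ - δ)
      = Real.sin φ * Real.cos δ + Real.sin δ * (1 - Real.cos φ) := by rw [Real.sin_sub]; ring
    _ ≤ Real.sin φ * 1 + δ * (φ ^ 2 / 2) := by gcongr; exact Real.cos_le_one δ
    _ = Real.sin φ + δ * φ / 2 * φ := by ring
    _ ≤ Real.sin φ + δ * φ / 2 * (π / 2 * Real.sin φ) := by
        have := hδ.trans hδφ
        gcongr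
    _ = (1 + π * δ * φ / 4) * Real.sin φ := by ring

lemma smul_unitVec_mem_of_convex {K : Set (EuclideanSpace ℝ (Fin 2))} (hK : Convex ℝ K)
    (h0 : 0 ∈ K) {θ : ℝ} (hp : r • unitVec θ ∈ K) (hq : r • unitVec (θ + φ) ∈ K) (hr : 0 < r)
    (hr' : 0 ≤ r') (hδ : 0 ≤ δ) (hδφ : δ ≤ φ) (hφ0 : 0 < φ) (hφ : φ ≤ π / 2)
    (h : r' * (1 + π * δ * φ / 4) ≤ r) : r' • unitVec (θ + δ) ∈ K := by
  have hsin : 0 < Real.sin φ := Real.sin_pos_of_pos_of_lt_pi hφ0 (by linarith [Real.pi_pos])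
  have ha : 0 ≤ r' * Real.sin (φ - δ) / (r * Real.sin φ) := by
    have := Real.sin_nonneg_of_nonneg_of_le_pi (sub_nonneg.2 hδφ) (by linarith)
    positivity
  have hb : 0 ≤ r' * Real.sin δ / (r * Real.sin φ) := by
    have := Real.sin_nonneg_of_nonneg_of_le_pi hδ (by linarith)
    positivity
  have hab : r' * Real.sin (φ - δ) / (r * Real.sin φ) + r' * Real.sin δ / (r * Real.sin φ) ≤ 1 := by
    rw [← add_div, div_le_one (by positivity)]
    calc r' * Real.sin (φ - δ) + r' * Real.sin δ
        = r' * (Real.sin δ + Real.sin (φ - δ)) := by ring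
      _ ≤ r' * ((1 + π * δ * φ / 4) * Real.sin φ) := by
          gcongr
          exact sin_add_sin_sub_le hδ hδφ hφ
      _ = r' * (1 + π * δ * φ / 4) * Real.sin φ := by ring
      _ ≤ r * Real.sin φ := by gcongr
  obtain ⟨y, hy, heq⟩ := hK.exists_mem_add_smul_eq hp hq ha hb
  have hpoint : r' • unitVec (θ + δ) =
      (r' * Real.sin (φ - δ) / (r * Real.sin φ) + r' * Real.sin δ / (r * Real.sin φ)) • y := by
    refine smul_right_injective _ hsin.ne' ?_
    beta_reduce
    rw [heq, smul_comm (Real.sin φ) r', sin_smul_unitVec_add]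
    simp only [smul_add, smul_smul]
    congr 2 <;> field_simp
  rw [hpoint]
  exact hK.smul_mem_of_zero_mem h0 hy ⟨add_nonneg ha hb, hab⟩

lemma cos_pi_div_mul_le {M : ℕ} (hM : M ≠ 0) {B : ℤ} (hB : ¬ (2 * M : ℤ) ∣ B) :
    Real.cos (π / M * B) ≤ 1 - 2 / (M : ℝ) ^ 2 := by
  set b := B.bmod (2 * M)
  have hM' : (0 : ℝ) < M := by positivity
  have hb0 : b ≠ 0 := fun h ↦ hB (by simpa using Int.dvd_iff_bmod_eq_zero.2 h)
  have hbM : |b| ≤ M := by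
    have hlo : -((2 * M : ℕ) / 2 : ℤ) ≤ b := Int.le_bmod (by omega)
    have hhi : b ≤ ((2 * M : ℕ) - 1) / 2 := Int.bmod_le (by omega)
    rw [abs_le]
    omega
  have hperiod : π / M * B = π / M * b + B.bdiv (2 * M) * (2 * π) := by
    have hB' : (B : ℝ) = b + (2 * M : ℕ) * B.bdiv (2 * M) :=
      mod_cast (Int.bmod_add_bdiv B (2 * M)).symm
    rw [hB']
    push_cast
    field_simp
  have hle_pi : |π / M * b| ≤ π := by
    rw [abs_mul, abs_of_nonneg (by positivity), div_mul_eq_mul_div, div_le_iff₀ hM']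
    gcongr
    exact_mod_cast hbM
  have hb1 : (1 : ℝ) ≤ (b : ℝ) ^ 2 := (one_le_sq_iff_one_le_abs _).2 (mod_cast Int.one_le_abs hb0)
  calc Real.cos (π / M * B) = Real.cos (π / M * b) := by
        rw [hperiod, Real.cos_add_int_mul_two_pi]
    _ ≤ 1 - 2 / π ^ 2 * (π / M * b) ^ 2 := Real.cos_le_one_sub_mul_cos_sq hle_pi
    _ = 1 - 2 / (M : ℝ) ^ 2 * (b : ℝ) ^ 2 := by field_simp
    _ ≤ 1 - 2 / (M : ℝ) ^ 2 := by
        gcongr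
        exact le_mul_of_one_le_right (by positivity) hb1

lemma one_div_le_dist_smul_unitVec {M : ℕ} (hM : M ≠ 0) (hr : 1 / 2 ≤ r) (hr' : 1 / 2 ≤ r')
    {a b : ℤ} (hab : ¬ (2 * M : ℤ) ∣ a - b) :
    1 / (M : ℝ) ≤ dist (r • unitVec (π / M * a)) (r' • unitVec (π / M * b)) := by
  have hcos : 2 / (M : ℝ) ^ 2 ≤ 1 - Real.cos (π / M * a - π / M * b) := by
    have := cos_pi_div_mul_le hM hab
    rw [← mul_sub, ← Int.cast_sub]
    linarith
  refine le_of_sq_le_sq ?_ dist_nonneg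
  calc (1 / (M : ℝ)) ^ 2 = 2 * (1 / 2) * (1 / 2) * (2 / (M : ℝ) ^ 2) := by ring
    _ ≤ 2 * r * r' * (1 - Real.cos (π / M * a - π / M * b)) := by gcongr
    _ ≤ (r - r') ^ 2 + 2 * r * r' * (1 - Real.cos (π / M * a - π / M * b)) :=
      le_add_of_nonneg_left (sq_nonneg _)
    _ = dist (r • unitVec (π / M * a)) (r' • unitVec (π / M * b)) ^ 2 :=
      (dist_smul_unitVec_sq ..).symm

end PolarCoordinates

section Rings

/-- The radius of the `j`-th ring of the construction with parameter `m`. The decrement `8 / m ^ 3`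
is large enough for each ring to lie in the convex hull of the previous one, as `π ^ 3 ≤ 4 * 8`. -/
noncomputable def ringRadius (m j : ℕ) : ℝ := 1 - 8 * j / (m : ℝ) ^ 3

/-- The `t`-th of the `2 * m` points of the `j`-th ring, indexed by `t : ℤ` modulo `2 * m`. Each
ring is rotated by `π / m ^ 2` against the previous one, so that the points of any `m` consecutive
rings have distinct angles, all of them multiples of `π / m ^ 2`. -/
noncomputable def ringPoint (m j : ℕ) (t : ℤ) : EuclideanSpace ℝ (Fin 2) :=
  ringRadius m j • unitVec (π / (m : ℝ) ^ 2 * (j + t * m))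

variable {m j j' : ℕ} {t t' : ℤ}

lemma ringRadius_le_one (m j : ℕ) : ringRadius m j ≤ 1 :=
  sub_le_self _ (by positivity)

lemma ringRadius_succ (m j : ℕ) : ringRadius m (j + 1) = ringRadius m j - 8 / (m : ℝ) ^ 3 := by
  simp only [ringRadius]
  push_cast
  ring

lemma ringRadius_succ_lt (hm : m ≠ 0) (j : ℕ) : ringRadius m (j + 1) < ringRadius m j := by
  rw [ringRadius_succ]
  exact sub_lt_self _ (by positivity)

lemma ringRadius_succ_mul_le (hm : m ≠ 0) (hj : 0 ≤ ringRadius m (j + 1)) :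
    ringRadius m (j + 1) * (1 + π * (π / (m : ℝ) ^ 2) * (π / m) / 4) ≤ ringRadius m j := by
  have hdeficit : π * (π / (m : ℝ) ^ 2) * (π / m) / 4 ≤ 8 / (m : ℝ) ^ 3 :=
    calc π * (π / (m : ℝ) ^ 2) * (π / m) / 4 = π ^ 3 / 4 / (m : ℝ) ^ 3 := by field_simp
      _ ≤ 3.15 ^ 3 / 4 / (m : ℝ) ^ 3 := by gcongr; exact Real.pi_lt_d2.le
      _ ≤ 8 / (m : ℝ) ^ 3 := by gcongr; norm_num
  calc ringRadius m (j + 1) * (1 + π * (π / (m : ℝ) ^ 2) * (π / m) / 4)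
      ≤ ringRadius m (j + 1) * (1 + 8 / (m : ℝ) ^ 3) := by gcongr
    _ ≤ ringRadius m (j + 1) + 1 * (8 / (m : ℝ) ^ 3) := by
      rw [mul_one_add]
      gcongr
      exact ringRadius_le_one m (j + 1)
    _ = ringRadius m j := by rw [ringRadius_succ]; ring

lemma norm_ringPoint (hj : 0 ≤ ringRadius m j) : ‖ringPoint m j t‖ = ringRadius m j := by
  rw [ringPoint, norm_smul, norm_unitVec, mul_one, Real.norm_of_nonneg hj]

lemma ringPoint_antiperiodic (hm : m ≠ 0) : Function.Antiperiodic (ringPoint m j) m := fun t ↦ by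
  have hangle : π / (m : ℝ) ^ 2 * (j + (t + m : ℤ) * m) =
      π / (m : ℝ) ^ 2 * (j + t * m) + π := by
    push_cast
    field_simp
    ring
  rw [ringPoint, hangle, unitVec_antiperiodic, smul_neg, ringPoint]

lemma finite_range_ringPoint (hm : m ≠ 0) : (Set.range (ringPoint m j)).Finite := by
  rw [← (ringPoint_antiperiodic hm).periodic_two_mul.image_Ioc (by positivity) 0]
  exact (Set.finite_Ioc _ _).image _

lemma zero_mem_convexHull_range_ringPoint (hm : m ≠ 0) :
    0 ∈ convexHull ℝ (Set.range (ringPoint m j)) := by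
  have hp := subset_convexHull ℝ _ (Set.mem_range_self (f := ringPoint m j) 0)
  have hq := subset_convexHull ℝ _ (Set.mem_range_self (f := ringPoint m j) (0 + m))
  rw [ringPoint_antiperiodic hm] at hq
  simpa using (convex_convexHull ℝ _).midpoint_mem hp hq

lemma ringPoint_succ_mem_convexHull (hm : 2 ≤ m) (hj : 0 ≤ ringRadius m (j + 1)) (t : ℤ) :
    ringPoint m (j + 1) t ∈ convexHull ℝ (Set.range (ringPoint m j)) := by
  have hm0 : m ≠ 0 := by omega
  have hm1 : (1 : ℝ) ≤ m := mod_cast hm.trans' one_le_two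
  have hδφ : π / (m : ℝ) ^ 2 ≤ π / m := by
    gcongr
    exact le_self_pow₀ hm1 two_ne_zero
  have hp := subset_convexHull ℝ _ (Set.mem_range_self (f := ringPoint m j) t)
  have hq := subset_convexHull ℝ _ (Set.mem_range_self (f := ringPoint m j) (t + 1))
  have hangle : π / (m : ℝ) ^ 2 * (j + (t + 1 : ℤ) * m) =
      π / (m : ℝ) ^ 2 * (j + t * m) + π / m := by
    push_cast
    field_simp
    ring
  have hangle' : π / (m : ℝ) ^ 2 * ((j + 1 : ℕ) + t * m) =
      π / (m : ℝ) ^ 2 * (j + t * m) + π / (m : ℝ) ^ 2 := by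
    push_cast
    ring
  rw [ringPoint, hangle] at hq
  rw [ringPoint, hangle']
  exact smul_unitVec_mem_of_convex (convex_convexHull ℝ _)
    (zero_mem_convexHull_range_ringPoint hm0) hp hq (hj.trans_lt (ringRadius_succ_lt hm0 j)) hj
    (by positivity) hδφ (by positivity) (by gcongr; exact_mod_cast hm)
    (ringRadius_succ_mul_le hm0 hj)

lemma range_ringPoint_succ_subset (hm : 2 ≤ m) (hj : 0 ≤ ringRadius m (j + 1)) :
    Set.range (ringPoint m (j + 1)) ⊆
      convexHull ℝ (Set.range (ringPoint m j)) \ Set.range (ringPoint m j) := by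
  rintro _ ⟨t, rfl⟩
  refine ⟨ringPoint_succ_mem_convexHull hm hj t, ?_⟩
  rintro ⟨s, hs⟩
  have hlt := ringRadius_succ_lt (m := m) (by omega) j
  have hnorm := congrArg norm hs
  rw [norm_ringPoint hj, norm_ringPoint (hj.trans hlt.le)] at hnorm
  exact hlt.ne' hnorm

lemma le_abs_sub_of_dvd_of_ringPoint_ne (hm : m ≠ 0)
    (hdvd : (2 * (m ^ 2 : ℕ) : ℤ) ∣ (j + t * m) - (j' + t' * m))
    (hne : ringPoint m j t ≠ ringPoint m j' t') : (m : ℝ) ≤ |(j : ℝ) - j'| := by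
  obtain ⟨k, hk⟩ := hdvd
  have hq : (j - j' : ℤ) = m * (t' - t + k * (2 * m)) := by
    push_cast at hk
    linear_combination hk
  have hq0 : t' - t + k * (2 * m) ≠ 0 := fun h0 ↦ by
    have hjj : j = j' := by
      rw [h0, mul_zero, sub_eq_zero] at hq
      exact_mod_cast hq
    refine hne ?_
    rw [hjj, ← (ringPoint_antiperiodic hm).periodic_two_mul.int_mul k t']
    congr 1
    linear_combination -h0
  have hle : (m : ℤ) ≤ |(j - j' : ℤ)| := by
    rw [hq, abs_mul, Nat.abs_cast]
    exact le_mul_of_one_le_right (by positivity) (Int.one_le_abs hq0)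
  exact_mod_cast hle

lemma abs_ringRadius_sub_ringRadius (m j j' : ℕ) :
    |ringRadius m j - ringRadius m j'| = 8 * |(j : ℝ) - j'| / (m : ℝ) ^ 3 := by
  have hsub : ringRadius m j - ringRadius m j' = -(8 * (j - j') / (m : ℝ) ^ 3) := by
    simp only [ringRadius]
    ring
  rw [hsub, abs_neg, abs_div, abs_mul, abs_of_nonneg (by positivity : (0 : ℝ) ≤ (m : ℝ) ^ 3),
    abs_of_pos (by norm_num : (0 : ℝ) < 8)]

lemma one_div_sq_le_dist_ringPoint (hm : m ≠ 0) (hj : 1 / 2 ≤ ringRadius m j)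
    (hj' : 1 / 2 ≤ ringRadius m j') (hne : ringPoint m j t ≠ ringPoint m j' t') :
    1 / (m : ℝ) ^ 2 ≤ dist (ringPoint m j t) (ringPoint m j' t') := by
  by_cases hdvd : (2 * (m ^ 2 : ℕ) : ℤ) ∣ (j + t * m) - (j' + t' * m)
  · calc 1 / (m : ℝ) ^ 2 ≤ 8 * m / (m : ℝ) ^ 3 := by
          field_simp
          norm_num
      _ ≤ 8 * |(j : ℝ) - j'| / (m : ℝ) ^ 3 := by
          gcongr
          exact le_abs_sub_of_dvd_of_ringPoint_ne hm hdvd hne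
      _ = |‖ringPoint m j t‖ - ‖ringPoint m j' t'‖| := by
          rw [norm_ringPoint (by linarith), norm_ringPoint (by linarith),
            abs_ringRadius_sub_ringRadius]
      _ ≤ dist (ringPoint m j t) (ringPoint m j' t') := by
          rw [dist_eq_norm]
          exact abs_norm_sub_norm_le _ _
  · have hangle (i : ℕ) (s : ℤ) :
        ringPoint m i s = ringRadius m i • unitVec (π / (m ^ 2 : ℕ) * (i + s * m : ℤ)) := by
      rw [ringPoint]
      push_cast
      rfl
    rw [hangle, hangle, ← Nat.cast_pow]
    exact one_div_le_dist_smul_unitVec (pow_ne_zero 2 hm) hj hj' hdvd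

lemma le_layerNum_of_range_ringPoint_subset (hm : 2 ≤ m) {J : ℕ}
    (hJ : ∀ j < J, 0 ≤ ringRadius m j) {X : Finset (EuclideanSpace ℝ (Fin 2))}
    (hX : ∀ j < J, Set.range (ringPoint m j) ⊆ X) : J ≤ layerNum X :=
  le_layerNum_of_subset_convexHull_sdiff hX (fun _ _ ↦ Set.range_nonempty _)
    fun _ hj ↦ range_ringPoint_succ_subset hm (hJ _ hj)

lemma exists_finset_range_ringPoint_subset (hm : m ≠ 0) {J : ℕ} {ρ : ℝ} (hρ : 1 / 2 ≤ ρ)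
    (hJ : ∀ j < J, ρ ≤ ringRadius m j) : ∃ Y : Finset (EuclideanSpace ℝ (Fin 2)),
      (∀ x ∈ Y, ρ ≤ ‖x‖ ∧ ‖x‖ ≤ 1) ∧
      (Y : Set (EuclideanSpace ℝ (Fin 2))).Pairwise (fun p q ↦ 1 / (m : ℝ) ^ 2 ≤ dist p q) ∧
      ∀ j < J, Set.range (ringPoint m j) ⊆ Y := by
  have hfin : (⋃ j ∈ Set.Iio J, Set.range (ringPoint m j)).Finite :=
    (Set.finite_Iio J).biUnion fun _ _ ↦ finite_range_ringPoint hm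
  refine ⟨hfin.toFinset, fun x hx ↦ ?_, ?_, fun j hj ↦ ?_⟩
  · obtain ⟨j, hj, t, rfl⟩ := Set.mem_iUnion₂.1 (hfin.mem_toFinset.1 hx)
    rw [norm_ringPoint (by linarith [hJ j hj])]
    exact ⟨hJ j hj, ringRadius_le_one m j⟩
  · rw [hfin.coe_toFinset]
    intro p hp q hq hne
    obtain ⟨j, hj, t, rfl⟩ := Set.mem_iUnion₂.1 hp
    obtain ⟨j', hj', t', rfl⟩ := Set.mem_iUnion₂.1 hq
    exact one_div_sq_le_dist_ringPoint hm (hρ.trans (hJ j hj)) (hρ.trans (hJ j' hj')) hne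
  · rw [hfin.coe_toFinset]
    exact Set.subset_biUnion_of_mem (u := fun j ↦ Set.range (ringPoint m j)) hj

lemma one_sub_le_ringRadius {c : ℝ} (hc : 0 ≤ c) (hj : 8 * j ≤ c * (m : ℝ) ^ 3) :
    1 - c ≤ ringRadius m j :=
  sub_le_sub_left (div_le_of_le_mul₀ (by positivity) hc hj) 1

end Rings

section Construction

lemma pairwise_le_dist_union {E : Type*} [SeminormedAddCommGroup E] {s t : Set E} {ρ l : ℝ}
    (hs : s.Pairwise fun p q ↦ l ≤ dist p q) (ht : t.Pairwise fun p q ↦ l ≤ dist p q)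
    (hs' : ∀ x ∈ s, ρ + l ≤ ‖x‖) (ht' : ∀ x ∈ t, ‖x‖ ≤ ρ) :
    (s ∪ t).Pairwise fun p q ↦ l ≤ dist p q := by
  have : Std.Symm fun p q : E ↦ l ≤ dist p q := ⟨fun p q h ↦ by rwa [dist_comm]⟩
  refine Set.pairwise_union_of_symm.2 ⟨hs, ht, fun p hp q hq _ ↦ ?_⟩
  calc l ≤ ‖p‖ - ‖q‖ := by linarith [hs' p hp, ht' q hq]
    _ ≤ ‖p - q‖ := norm_sub_norm_le p q
    _ = dist p q := (dist_eq_norm p q).symm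

lemma eventually_exists_finset_norm_le_pairwise_le_dist :
    ∀ᶠ m : ℕ in atTop, ∃ Z : Finset (EuclideanSpace ℝ (Fin 2)),
      (∀ x ∈ Z, ‖x‖ ≤ 99 / 100) ∧
      (Z : Set (EuclideanSpace ℝ (Fin 2))).Pairwise (fun p q ↦ 1 / (m : ℝ) ^ 2 ≤ dist p q) ∧
      3.07 * (m : ℝ) ^ 4 ≤ Z.card := by
  have hvol : 3.07 < volume.real (closedBall (0 : EuclideanSpace ℝ (Fin 2)) (99 / 100)) := by
    rw [measureReal_def, volume_toReal_closedBall_plane 0 (by norm_num)]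
    linarith [Real.pi_gt_d2]
  have hcore := eventually_exists_finset_pairwise_le_dist_card isBounded_closedBall
    measurableSet_closedBall ((convex_closedBall _ _).addHaar_frontier volume) hvol
  filter_upwards [(tendsto_pow_atTop two_ne_zero).eventually hcore] with m ⟨Z, hZ, hsep, hcard⟩
  refine ⟨Z, fun x hx ↦ mem_closedBall_zero_iff.1 (hZ hx), by simpa using hsep, ?_⟩
  rw [finrank_euclideanSpace_fin] at hcard
  push_cast at hcard
  linarith

lemma eventually_exists_pairwise_le_dist_le_layerNum :
    ∀ᶠ m : ℕ in atTop, ∃ X : Finset (EuclideanSpace ℝ (Fin 2)),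
      (X : Set (EuclideanSpace ℝ (Fin 2))) ⊆ closedBall 0 1 ∧
      (X : Set (EuclideanSpace ℝ (Fin 2))).Pairwise (fun p q ↦ 1 / (m : ℝ) ^ 2 ≤ dist p q) ∧
      3.07 * (m : ℝ) ^ 4 ≤ X.card ∧ (m : ℝ) ^ 3 / 3200 ≤ layerNum X := by
  filter_upwards [eventually_exists_finset_norm_le_pairwise_le_dist, eventually_ge_atTop 15]
    with m ⟨Z, hZ, hZsep, hZcard⟩ hm
  have hm' : (15 : ℝ) ≤ m := mod_cast hm
  have hl : 1 / (m : ℝ) ^ 2 ≤ 1 / 200 := by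
    gcongr
    nlinarith
  have hradius (j : ℕ) (hj : j < m ^ 3 / 1600) : 199 / 200 ≤ ringRadius m j := by
    have hcast : 1600 * (j : ℝ) ≤ (m : ℝ) ^ 3 := mod_cast show 1600 * j ≤ m ^ 3 by omega
    have := one_sub_le_ringRadius (m := m) (j := j) (c := 1 / 200) (by norm_num) (by linarith)
    linarith
  obtain ⟨Y, hY, hYsep, hrings⟩ :=
    exists_finset_range_ringPoint_subset (by omega) (by norm_num) hradius
  refine ⟨Y ∪ Z, fun x hx ↦ mem_closedBall_zero_iff.2 ?_, ?_, ?_, ?_⟩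
  · obtain hxY | hxZ := Finset.mem_union.1 hx
    · exact (hY x hxY).2
    · exact (hZ x hxZ).trans (by norm_num)
  · rw [Finset.coe_union]
    exact pairwise_le_dist_union hYsep hZsep (fun x hx ↦ by linarith [(hY x hx).1]) hZ
  · exact hZcard.trans (mod_cast Finset.card_le_card Finset.subset_union_right)
  · have hlayers : m ^ 3 / 1600 ≤ layerNum (Y ∪ Z) :=
      le_layerNum_of_range_ringPoint_subset (by omega)
        (fun j hj ↦ (hradius j hj).trans' (by norm_num))
        fun j hj ↦ (hrings j hj).trans (Finset.coe_subset.2 Finset.subset_union_left)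
    have hcube : 15 ^ 3 ≤ m ^ 3 := by gcongr
    rw [div_le_iff₀' (by norm_num)]
    exact_mod_cast show m ^ 3 ≤ 3200 * layerNum (Y ∪ Z) by omega

lemma card_le_of_pairwise_one_div_sq_le_dist {m : ℕ} (hm : m ≠ 0)
    {X : Finset (EuclideanSpace ℝ (Fin 2))}
    (hball : (X : Set (EuclideanSpace ℝ (Fin 2))) ⊆ closedBall 0 1)
    (hsep : (X : Set (EuclideanSpace ℝ (Fin 2))).Pairwise
      fun p q ↦ 1 / (m : ℝ) ^ 2 ≤ dist p q) : (X.card : ℝ) ≤ 9 * (m : ℝ) ^ 4 := by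
  have hpack := card_mul_pow_le_of_pairwise_le_dist (by positivity) zero_le_one hball hsep
  rw [finrank_euclideanSpace_fin] at hpack
  have hl : 1 / (m : ℝ) ^ 2 ≤ 1 :=
    div_le_one_of_le₀ (one_le_pow₀ (mod_cast Nat.one_le_iff_ne_zero.2 hm)) (by positivity)
  calc (X.card : ℝ) = X.card * (1 / (m : ℝ) ^ 2) ^ 2 * (m : ℝ) ^ 4 := by field_simp
    _ ≤ (2 * 1 + 1 / (m : ℝ) ^ 2) ^ 2 * (m : ℝ) ^ 4 := by gcongr
    _ ≤ (2 * 1 + 1) ^ 2 * (m : ℝ) ^ 4 := by gcongr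
    _ = 9 * (m : ℝ) ^ 4 := by ring

end Construction

lemma exists_pow_le_le_two_mul_pow {k M n : ℕ} (hk : k ≠ 0) (hM : 1 ≤ M) (hn : M ^ k ≤ n) :
    ∃ m, M ≤ m ∧ m ^ k ≤ n ∧ n ≤ (2 * m) ^ k := by
  have hMm : M ≤ k.nthRoot n := (Nat.le_nthRoot_iff hk).2 hn
  refine ⟨k.nthRoot n, hMm, Nat.pow_nthRoot_le (.inl hk),
    (Nat.lt_pow_nthRoot_add_one hk n).le.trans ?_⟩
  gcongr
  omega

lemma rpow_three_fourths_le {x y : ℝ} (hx : 0 ≤ x) (hy : 0 ≤ y) (h : x ≤ y ^ 4) :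
    x ^ ((3 : ℝ) / 4) ≤ y ^ 3 :=
  calc x ^ ((3 : ℝ) / 4) ≤ (y ^ 4) ^ ((3 : ℝ) / 4) := by gcongr
    _ = y ^ 3 := by
      rw [← Real.rpow_natCast, ← Real.rpow_mul hy, ← Real.rpow_natCast]
      norm_num

theorem lower_bound_construction_plane_general :
    ∃ c : ℝ, 0 < c ∧ ∃ c₁ : ℝ, 0 < c₁ ∧ ∃ c₂ : ℝ, 0 < c₂ ∧ ∃ N : ℕ, ∀ n : ℕ, N ≤ n →
      ∃ X : Finset (EuclideanSpace ℝ (Fin 2)),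
        (∀ x ∈ X, x ∈ closedBall (0 : EuclideanSpace ℝ (Fin 2)) 1) ∧
        IsEvenlyDistributed 1 X ∧
        c₁ * n ≤ (X.card : ℝ) ∧ (X.card : ℝ) ≤ c₂ * n ∧
        c * (X.card : ℝ) ^ ((3 : ℝ) / 4) ≤ (layerNum X : ℝ) := by
  obtain ⟨M, hM⟩ := eventually_atTop.1 eventually_exists_pairwise_le_dist_le_layerNum
  refine ⟨1 / 25600, by norm_num, 1 / 8, by norm_num, 9, by norm_num, max M 1 ^ 4, fun n hn ↦ ?_⟩
  obtain ⟨m, hMm, hmn, hnm⟩ := exists_pow_le_le_two_mul_pow four_ne_zero (le_max_right M 1) hn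
  obtain ⟨X, hball, hsep, hlower, hlayers⟩ := hM m ((le_max_left M 1).trans hMm)
  have hm : m ≠ 0 := by omega
  have hupper := card_le_of_pairwise_one_div_sq_le_dist hm hball hsep
  have hmn' : (m : ℝ) ^ 4 ≤ n := mod_cast hmn
  have hnm' : (n : ℝ) ≤ (2 * m) ^ 4 := mod_cast hnm
  have hdensity : 3.07 ≤ X.card * (1 / (m : ℝ) ^ 2) ^ 2 := by
    field_simp
    linarith
  have hrpow : (X.card : ℝ) ^ ((3 : ℝ) / 4) ≤ (2 * m) ^ 3 :=
    rpow_three_fourths_le (by positivity) (by positivity) (by linarith)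
  exact ⟨X, hball,
    isEvenlyDistributed_of_pairwise_le_dist (by positivity) hsep (by nlinarith [Real.pi_gt_d2]),
    by linarith, by linarith, by linarith⟩

theorem lower_bound_construction_plane (α : ℝ) (hα : 1 < α) :
    ∃ c : ℝ, 0 < c ∧ ∃ c₁ : ℝ, 0 < c₁ ∧ ∃ c₂ : ℝ, 0 < c₂ ∧ ∃ N : ℕ, ∀ n : ℕ, N ≤ n →
      ∃ X : Finset (EuclideanSpace ℝ (Fin 2)),
        (∀ x ∈ X, x ∈ closedBall (0 : EuclideanSpace ℝ (Fin 2)) 1) ∧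
        (∀ (z : EuclideanSpace ℝ (Fin 2)) (r : ℝ), 0 < r →
          ((X.filter fun x => x ∈ closedBall z r).card : ℤ)
            ≤ ⌈α * X.card * (volume (closedBall z r)).toReal⌉) ∧
        c₁ * n ≤ (X.card : ℝ) ∧ (X.card : ℝ) ≤ c₂ * n ∧
        c * (X.card : ℝ) ^ ((3 : ℝ) / 4) ≤ (layerNum X : ℝ) := by
  obtain ⟨c, hc, c₁, hc₁, c₂, hc₂, N, h⟩ := lower_bound_construction_plane_general
  refine ⟨c, hc, c₁, hc₁, c₂, hc₂, N, fun n hn ↦ ?_⟩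
  obtain ⟨X, hball, heven, hcard⟩ := h n hn
  exact ⟨X, hball, heven.mono hα.le, hcard⟩
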